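/- Under Setup (A), the Schrödinger potentials are weakly differentiable with ∇φ(x) = E_π[∇_x c(X,Y) | X = x] = ∫ ∇_x c(x,y) exp((φ(x)+ψ(y)−c(x,y))/ε) ν(dy) and ∇ψ(y) = E_π[∇_y c(X,Y) | Y = y] = ∫ ∇_y c(x,y) exp((φ(x)+ψ(y)−c(x,y))/ε) μ(dx). Moreover these weak gradients are themselves weakly differentiable, with ∇²φ(x) = E_π[∇²_{xx} c(X,Y) | X = x] − ε^{-1} Cov_π(∇_x c(X,Y) | X = x) and ∇²ψ(y) = E_π[∇²_{yy} c(X,Y) | Y = y] − ε^{-1} Cov_π(∇_y c(X,Y) | Y = y), where Cov_π(A | X = x) := E_π[A ⊗ A | X = x] − E_π[A | X = x] ⊗ E_π[A | X = x]. -/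

import Mathlib

open MeasureTheory
open scoped RealInnerProductSpace

noncomputable section

variable {d : ℕ}

local notation "E" => EuclideanSpace ℝ (Fin d)

/-- The divergence of a vector field on `ℝ^d`, as the trace of its Jacobian. -/
def dvg (h : E → E) (x : E) : ℝ :=
  ∑ i : Fin d, ⟪fderiv ℝ h x (EuclideanSpace.single i 1), EuclideanSpace.single i 1⟫

/-- `g` is the weak gradient of `f`. -/
def HasWeakGradient (f : E → ℝ) (g : E → E) : Prop :=
  LocallyIntegrable f volume ∧ LocallyIntegrable g volume ∧
  ∀ h : E → E, ContDiff ℝ (⊤ : ℕ∞) h → HasCompactSupport h →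
    ∫ x, f x * dvg h x = - ∫ x, ⟪g x, h x⟫

/-- The outer (tensor) product `a ⊗ b` of two vectors, as the linear map
`v ↦ ⟪b, v⟫ a`. -/
def outer (a b : E) : E →L[ℝ] E := (innerSL ℝ b).smulRight a

/-- `A` is the weak Jacobian of the vector field `f`: each component of `f` has a
weak gradient, given by the corresponding row of `A`. -/
def HasWeakJacobian (f : E → E) (A : E → E →L[ℝ] E) : Prop :=
  ∀ i : Fin d, HasWeakGradient (fun x => ⟪f x, EuclideanSpace.single i 1⟫)
    (fun x => ContinuousLinearMap.adjoint (A x) (EuclideanSpace.single i 1))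

/-- The density `exp((φ(x)+ψ(y)−c(x,y))/ε)` of `π` with respect to `μ ⊗ ν`; for fixed
`x`, `y ↦ schrDensity ε c φ ψ x y` is the density of the conditional law `π^x` w.r.t. `ν`,
and symmetrically. -/
def schrDensity (ε : ℝ) (c : E × E → ℝ) (φ ψ : E → ℝ) (x y : E) : ℝ :=
  Real.exp ((φ x + ψ y - c (x, y)) / ε)

/-- Partial gradient `∇_x c(x,y)`. -/
def gradx (c : E × E → ℝ) (x y : E) : E := gradient (fun x' => c (x', y)) x

/-- Partial gradient `∇_y c(x,y)`. -/
def grady (c : E × E → ℝ) (x y : E) : E := gradient (fun y' => c (x, y')) y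

/-- Partial Hessian `∇²_{xx} c(x,y)`. -/
def hessx (c : E × E → ℝ) (x y : E) : E →L[ℝ] E := fderiv ℝ (fun x' => gradx c x' y) x

/-- Partial Hessian `∇²_{yy} c(x,y)`. -/
def hessy (c : E × E → ℝ) (x y : E) : E →L[ℝ] E := fderiv ℝ (fun y' => grady c x y') y

/-- Local domination by exponentials in the second variable. -/
def LDom {W : Type*} [NormedAddCommGroup W] (f : E → E → W) : Prop :=
  ∀ r : ℝ, ∃ C K : ℝ, 0 ≤ C ∧ ∀ x : E, ‖x‖ ≤ r → ∀ y : E, ‖f x y‖ ≤ C * Real.exp (K * ‖y‖)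

theorem LDom.smul {W : Type*} [NormedAddCommGroup W] [NormedSpace ℝ W] {f : E → E → ℝ}
    {g : E → E → W} (hf : LDom f) (hg : LDom g) : LDom (fun x y => f x y • g x y) := by
  intro r
  obtain ⟨C, K, hC, h⟩ := hf r
  obtain ⟨C', K', hC', h'⟩ := hg r
  refine ⟨C * C', K + K', mul_nonneg hC hC', fun x hx y => ?_⟩
  rw [norm_smul, add_mul, Real.exp_add]
  calc ‖f x y‖ * ‖g x y‖ ≤ (C * Real.exp (K * ‖y‖)) * (C' * Real.exp (K' * ‖y‖)) :=
        mul_le_mul (h x hx y) (h' x hx y) (norm_nonneg _) (by positivity)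
    _ = _ := by ring

theorem LDom.mono {W W' : Type*} [NormedAddCommGroup W] [NormedAddCommGroup W'] {f : E → E → W}
    {g : E → E → W'} (hf : LDom f) (A : ℝ) (hA : 0 ≤ A) (h : ∀ x y, ‖g x y‖ ≤ A * ‖f x y‖) :
    LDom g := by
  intro r
  obtain ⟨C, K, hC, h1⟩ := hf r
  refine ⟨A * C, K, mul_nonneg hA hC, fun x hx y => (h x y).trans ?_⟩
  rw [mul_assoc]
  exact mul_le_mul_of_nonneg_left (h1 x hx y) hA

theorem LDom.integrable {W : Type*} [NormedAddCommGroup W] [NormedSpace ℝ W] {ν : Measure E}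
    (hν : ∀ K : ℝ, Integrable (fun y : E => Real.exp (K * ‖y‖)) ν)
    {f : E → E → W} (hf : LDom f) (hm : ∀ x, AEStronglyMeasurable (f x) ν) (x : E) :
    Integrable (f x) ν := by
  obtain ⟨C, K, hC, h⟩ := hf ‖x‖
  exact ((hν K).const_mul C).mono' (hm x) (Filter.Eventually.of_forall fun y => h x le_rfl y)

theorem LDom.continuous {W : Type*} [NormedAddCommGroup W] [NormedSpace ℝ W] {ν : Measure E}
    (hν : ∀ K : ℝ, Integrable (fun y : E => Real.exp (K * ‖y‖)) ν)
    {f : E → E → W} (hf : LDom f) (hm : ∀ x, AEStronglyMeasurable (f x) ν)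
    (hcont : ∀ y, Continuous fun x => f x y) :
    Continuous (fun x => ∫ y, f x y ∂ν) := by
  rw [continuous_iff_continuousAt]
  intro x
  obtain ⟨C, K, hC, h⟩ := hf (‖x‖ + 1)
  have hnb : ∀ᶠ x' in nhds x, ‖x'‖ ≤ ‖x‖ + 1 :=
    (continuous_norm.tendsto x).eventually (ge_mem_nhds (by linarith))
  refine continuousAt_of_dominated (bound := fun y => C * Real.exp (K * ‖y‖))
    (Filter.Eventually.of_forall hm) ?_ ((hν K).const_mul C)
    (Filter.Eventually.of_forall fun y => (hcont y).continuousAt)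
  filter_upwards [hnb] with x' hx'
  exact Filter.Eventually.of_forall fun y => h x' hx' y

theorem LDom.hasFDerivAt {W : Type*} [NormedAddCommGroup W] [NormedSpace ℝ W] {ν : Measure E}
    (hν : ∀ K : ℝ, Integrable (fun y : E => Real.exp (K * ‖y‖)) ν)
    {f : E → E → W} {f' : E → E → E →L[ℝ] W}
    (hf : LDom f) (hm : ∀ x, AEStronglyMeasurable (f x) ν)
    (hf' : LDom f') (hm' : ∀ x, AEStronglyMeasurable (f' x) ν)
    (hd : ∀ x y, HasFDerivAt (fun x' => f x' y) (f' x y) x) (x : E) :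
    HasFDerivAt (fun x => ∫ y, f x y ∂ν) (∫ y, f' x y ∂ν) x := by
  obtain ⟨C, K, hC, h⟩ := hf' (‖x‖ + 1)
  have hnb : ∀ᶠ x' in nhds x, ‖x'‖ ≤ ‖x‖ + 1 :=
    (continuous_norm.tendsto x).eventually (ge_mem_nhds (by linarith))
  exact hasFDerivAt_integral_of_dominated_of_fderiv_le
    (bound := fun y => C * Real.exp (K * ‖y‖)) hnb
    (Filter.Eventually.of_forall hm) (hf.integrable hν hm x) (hm' x)
    (Filter.Eventually.of_forall fun y x' hx' => h x' hx' y) ((hν K).const_mul C)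
    (Filter.Eventually.of_forall fun y x' _ => hd x' y)

theorem hasWeakGradient_of_C1 {f : E → ℝ} {g : E → E}
    (hf : ∀ x, HasFDerivAt f (innerSL ℝ (g x)) x) (hg : Continuous g) :
    HasWeakGradient f g := by
  have hfc : Continuous f := continuous_iff_continuousAt.2 fun x => (hf x).continuousAt
  refine ⟨hfc.locallyIntegrable, hg.locallyIntegrable, fun h hh hcs => ?_⟩
  have hdh : Differentiable ℝ h := hh.differentiable (by simp)
  have hd (i : Fin d) (x : E) : HasFDerivAt (fun x => ⟪h x, EuclideanSpace.single i (1:ℝ)⟫)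
      ((innerSL ℝ (EuclideanSpace.single i (1:ℝ))).comp (fderiv ℝ h x)) x := by
    have := ((innerSL ℝ (EuclideanSpace.single i (1:ℝ))).hasFDerivAt).comp x
      (hdh x).hasFDerivAt
    refine this.congr_of_eventuallyEq (Filter.Eventually.of_forall fun y => ?_)
    simp [real_inner_comm]
  have hch : Continuous h := hh.continuous
  have hcf : Continuous (fderiv ℝ h) := hh.continuous_fderiv (by simp)
  have hIntg (i : Fin d) : Integrable (fun x => f x *
      ⟪fderiv ℝ h x (EuclideanSpace.single i (1:ℝ)), EuclideanSpace.single i (1:ℝ)⟫) := by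
    refine Continuous.integrable_of_hasCompactSupport (by fun_prop) ?_
    refine (hcs.fderiv (𝕜 := ℝ)).mono ?_
    intro x hx hx0
    simp [hx0] at hx
  have hIntg2 (i : Fin d) : Integrable (fun x =>
      ⟪g x, EuclideanSpace.single i (1:ℝ)⟫ * ⟪h x, EuclideanSpace.single i (1:ℝ)⟫) := by
    refine Continuous.integrable_of_hasCompactSupport (by fun_prop) ?_
    refine hcs.mono ?_
    intro x hx hx0
    simp [hx0] at hx
  have hIntg3 (i : Fin d) : Integrable (fun x =>
      f x * ⟪h x, EuclideanSpace.single i (1:ℝ)⟫) := by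
    refine Continuous.integrable_of_hasCompactSupport (by fun_prop) ?_
    refine hcs.mono ?_
    intro x hx hx0
    simp [hx0] at hx
  have key (i : Fin d) : ∫ x, f x *
      ⟪fderiv ℝ h x (EuclideanSpace.single i (1:ℝ)), EuclideanSpace.single i (1:ℝ)⟫ =
      - ∫ x, ⟪g x, EuclideanSpace.single i (1:ℝ)⟫ * ⟪h x, EuclideanSpace.single i (1:ℝ)⟫ := by
    have := integral_bilinear_hasFDerivAt_right_eq_neg_left_of_integrable (μ := volume)
      (f := f) (g := fun x => ⟪h x, EuclideanSpace.single i (1:ℝ)⟫)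
      (f' := fun x => innerSL ℝ (g x))
      (g' := fun x => (innerSL ℝ (EuclideanSpace.single i (1:ℝ))).comp (fderiv ℝ h x))
      (v := EuclideanSpace.single i (1:ℝ)) (B := ContinuousLinearMap.mul ℝ ℝ)
      (by simpa using hIntg2 i) (by simpa [real_inner_comm] using hIntg i)
      (by simpa using hIntg3 i) (fun x _ => hf x) (fun x _ => hd i x)
    simpa [real_inner_comm] using this
  unfold dvg
  simp_rw [Finset.mul_sum]
  rw [integral_finsetSum _ (fun i _ => hIntg i)]
  simp_rw [key]
  rw [Finset.sum_neg_distrib, ← integral_finsetSum _ (fun i _ => hIntg2 i)]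
  congr 2
  ext x
  rw [PiLp.inner_apply]
  refine Finset.sum_congr rfl fun i _ => ?_
  simp [EuclideanSpace.inner_single_right, mul_comm]

theorem exp_moments {δ : ℝ} (hδ : 0 < δ) {V : E → ℝ} (hV : Continuous V)
    (hs : Integrable (fun x => Real.exp (δ * ‖x‖ ^ 2) * Real.exp (-V x)) volume) (K : ℝ) :
    Integrable (fun y : E => Real.exp (K * ‖y‖))
      (volume.withDensity fun y => ENNReal.ofReal (Real.exp (-V y))) := by
  rw [integrable_withDensity_iff_integrable_smul' (by fun_prop) (by simp)]
  simp_rw [ENNReal.toReal_ofReal (Real.exp_pos _).le]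
  refine (hs.const_mul (Real.exp (K ^ 2 / (4 * δ)))).mono'
    (Continuous.aestronglyMeasurable (by fun_prop))
    (Filter.Eventually.of_forall fun y => ?_)
  rw [smul_eq_mul, Real.norm_of_nonneg (by positivity),
    ← Real.exp_add, ← Real.exp_add, ← Real.exp_add]
  refine Real.exp_le_exp.2 ?_
  have : K * ‖y‖ ≤ K ^ 2 / (4 * δ) + δ * ‖y‖ ^ 2 := by
    have : K ^ 2 / (4 * δ) + δ * ‖y‖ ^ 2 - K * ‖y‖ = (K - 2 * δ * ‖y‖) ^ 2 / (4 * δ) := by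
      field_simp; ring
    have h2 : 0 ≤ (K - 2 * δ * ‖y‖) ^ 2 / (4 * δ) := by positivity
    linarith
  linarith

/-- The linear map extracting the Riesz representative of the `x`-part of a functional. -/
def rieszX : (E × E →L[ℝ] ℝ) →L[ℝ] E where
  toFun l := (InnerProductSpace.toDual ℝ E).symm (l.comp (ContinuousLinearMap.inl ℝ E E))
  map_add' a b := by simp [ContinuousLinearMap.add_comp]
  map_smul' r a := by simp [ContinuousLinearMap.smul_comp]
  cont := by
    refine (InnerProductSpace.toDual ℝ E).symm.continuous.comp ?_
    exact continuous_id.clm_comp continuous_const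

theorem rieszX_apply (l : E × E →L[ℝ] ℝ) : rieszX l =
    (InnerProductSpace.toDual ℝ E).symm (l.comp (ContinuousLinearMap.inl ℝ E E)) := rfl

theorem innerSL_rieszX (l : E × E →L[ℝ] ℝ) :
    innerSL ℝ (rieszX l) = l.comp (ContinuousLinearMap.inl ℝ E E) := by
  ext v
  simp [rieszX_apply]

theorem hasFDerivAt_inl (x y : E) :
    HasFDerivAt (fun x' : E => (x', y)) (ContinuousLinearMap.inl ℝ E E) x :=
  hasFDerivAt_prodMk_left x y

theorem gradx_eq {c : E × E → ℝ} (hc : ContDiff ℝ 2 c) (x y : E) :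
    gradx c x y = rieszX (fderiv ℝ c (x, y)) := by
  have h : HasFDerivAt (fun x' => c (x', y))
      ((fderiv ℝ c (x, y)).comp (ContinuousLinearMap.inl ℝ E E)) x :=
    HasFDerivAt.comp x (hc.differentiable (by simp) (x, y)).hasFDerivAt (hasFDerivAt_inl x y)
  rw [gradx, gradient, h.fderiv, rieszX_apply]

theorem hasFDerivAt_c {c : E × E → ℝ} (hc : ContDiff ℝ 2 c) (x y : E) :
    HasFDerivAt (fun x' => c (x', y)) (innerSL ℝ (gradx c x y)) x := by
  rw [gradx_eq hc, innerSL_rieszX]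
  exact HasFDerivAt.comp x (hc.differentiable (by simp) (x, y)).hasFDerivAt (hasFDerivAt_inl x y)

theorem hasFDerivAt_gradx_aux {c : E × E → ℝ} (hc : ContDiff ℝ 2 c) (x y : E) :
    HasFDerivAt (fun x' => gradx c x' y)
      (rieszX.comp ((fderiv ℝ (fderiv ℝ c) (x, y)).comp (ContinuousLinearMap.inl ℝ E E))) x := by
  simp_rw [gradx_eq hc]
  have h2 : Differentiable ℝ (fderiv ℝ c) :=
    (hc.fderiv_right (m := 1) (by norm_num)).differentiable (by simp)
  exact rieszX.hasFDerivAt.comp x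
    (HasFDerivAt.comp x (h2 (x, y)).hasFDerivAt (hasFDerivAt_inl x y))

theorem hessx_eq {c : E × E → ℝ} (hc : ContDiff ℝ 2 c) (x y : E) :
    hessx c x y =
      rieszX.comp ((fderiv ℝ (fderiv ℝ c) (x, y)).comp (ContinuousLinearMap.inl ℝ E E)) :=
  (hasFDerivAt_gradx_aux hc x y).fderiv

theorem hasFDerivAt_gradx {c : E × E → ℝ} (hc : ContDiff ℝ 2 c) (x y : E) :
    HasFDerivAt (fun x' => gradx c x' y) (hessx c x y) x := by
  rw [hessx_eq hc]
  exact hasFDerivAt_gradx_aux hc x y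

theorem continuous_gradx {c : E × E → ℝ} (hc : ContDiff ℝ 2 c) :
    Continuous (fun z : E × E => gradx c z.1 z.2) := by
  simp_rw [gradx_eq hc]
  exact rieszX.continuous.comp (hc.continuous_fderiv (by simp))

theorem continuous_hessx {c : E × E → ℝ} (hc : ContDiff ℝ 2 c) :
    Continuous (fun z : E × E => hessx c z.1 z.2) := by
  simp_rw [hessx_eq hc]
  have h2 : Continuous (fderiv ℝ (fderiv ℝ c)) :=
    (hc.fderiv_right (m := 1) (by norm_num)).continuous_fderiv (by simp)
  exact continuous_const.clm_comp (h2.clm_comp continuous_const)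

theorem gradx_hessx_bound {c : E × E → ℝ} (hc : ContDiff ℝ 2 c)
    (hHess : ∃ R : ℝ, ∀ z : E × E, ‖iteratedFDeriv ℝ 2 c z‖ ≤ R) :
    ∃ A : ℝ, 0 ≤ A ∧ (∀ x y, ‖gradx c x y‖ ≤ A * (1 + ‖x‖ + ‖y‖)) ∧
      ∀ x y, ‖hessx c x y‖ ≤ A := by
  obtain ⟨R, hR⟩ := hHess
  have hR0 : 0 ≤ R := (norm_nonneg _).trans (hR 0)
  have h2 : Differentiable ℝ (fderiv ℝ c) :=
    (hc.fderiv_right (m := 1) (by norm_num)).differentiable (by simp)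
  have hb (z : E × E) : ‖fderiv ℝ (fderiv ℝ c) z‖ ≤ R := by
    rw [← norm_iteratedFDeriv_one, norm_iteratedFDeriv_fderiv]
    exact hR z
  have hlip (z : E × E) : ‖fderiv ℝ c z - fderiv ℝ c 0‖ ≤ R * ‖z - 0‖ :=
    convex_univ.norm_image_sub_le_of_norm_fderiv_le (𝕜 := ℝ) (fun z _ => h2 z) (fun z _ => hb z)
      (Set.mem_univ _) (Set.mem_univ _)
  set B := ‖fderiv ℝ c 0‖ with hB
  have hB0 : 0 ≤ B := norm_nonneg _
  set J := ‖(rieszX : (E × E →L[ℝ] ℝ) →L[ℝ] E)‖ with hJ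
  have hJ0 : 0 ≤ J := by rw [hJ]; exact norm_nonneg (rieszX : (E × E →L[ℝ] ℝ) →L[ℝ] E)
  refine ⟨J * (R + B), by positivity, fun x y => ?_, fun x y => ?_⟩
  · rw [gradx_eq hc]
    have h3 : ‖fderiv ℝ c (x, y)‖ ≤ B + R * (‖x‖ + ‖y‖) := by
      have h4 := hlip (x, y)
      have h5 : ‖(x, y)‖ ≤ ‖x‖ + ‖y‖ := by
        rw [Prod.norm_mk]
        exact max_le_add_of_nonneg (norm_nonneg _) (norm_nonneg _)
      have h6 := norm_sub_norm_le (fderiv ℝ c (x, y)) (fderiv ℝ c 0)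
      rw [sub_zero] at h4
      have h7 := mul_le_mul_of_nonneg_left h5 hR0
      linarith
    refine (rieszX.le_opNorm _).trans ?_
    rw [mul_assoc]
    refine mul_le_mul_of_nonneg_left (h3.trans ?_) hJ0
    have := norm_nonneg x
    have := norm_nonneg y
    nlinarith [mul_nonneg hB0 (norm_nonneg x), mul_nonneg hB0 (norm_nonneg y)]
  · rw [hessx_eq hc]
    refine (ContinuousLinearMap.opNorm_comp_le _ _).trans ?_
    refine mul_le_mul_of_nonneg_left ?_ hJ0
    refine (ContinuousLinearMap.opNorm_comp_le _ _).trans ?_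
    have h1 : ‖ContinuousLinearMap.inl ℝ E E‖ ≤ 1 :=
      ContinuousLinearMap.norm_inl_le_one ℝ E E
    calc _ ≤ R * 1 := mul_le_mul (hb _) h1 (norm_nonneg _) hR0
      _ ≤ R + B := by linarith

theorem LDom.gradx {c : E × E → ℝ} {A : ℝ} (hA : 0 ≤ A)
    (h : ∀ x y, ‖gradx c x y‖ ≤ A * (1 + ‖x‖ + ‖y‖)) : LDom (fun x y => gradx c x y) := by
  intro r
  refine ⟨A * Real.exp r, 1, by positivity, fun x hx y => (h x y).trans ?_⟩
  rw [mul_assoc, ← Real.exp_add]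
  refine mul_le_mul_of_nonneg_left ?_ hA
  have := Real.add_one_le_exp (r + 1 * ‖y‖)
  linarith

theorem LDom.hessx {c : E × E → ℝ} {A : ℝ} (hA : 0 ≤ A)
    (h : ∀ x y, ‖hessx c x y‖ ≤ A) : LDom (fun x y => hessx c x y) := by
  intro r
  exact ⟨A, 0, hA, fun x hx y => by simpa using h x y⟩

/-- The unnormalized weight. -/
def wgt (ε : ℝ) (c : E × E → ℝ) (ψ : E → ℝ) (x y : E) : ℝ :=
  Real.exp ((ψ y - c (x, y)) / ε)

theorem schr_eq (ε : ℝ) (c : E × E → ℝ) (φ ψ : E → ℝ) (x y : E) :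
    schrDensity ε c φ ψ x y = Real.exp (φ x / ε) * wgt ε c ψ x y := by
  rw [schrDensity, wgt, ← Real.exp_add]
  congr 1
  ring

theorem exists_good_set {μ : Measure E} [IsProbabilityMeasure μ] {φ : E → ℝ}
    (hφm : Measurable φ) : ∃ n : ℕ,
      0 < μ.real ({x : E | ‖x‖ ≤ n} ∩ {x | -(n:ℝ) ≤ φ x}) := by
  by_contra! hcon
  have h0 : ∀ n : ℕ, μ ({x : E | ‖x‖ ≤ n} ∩ {x | -(n:ℝ) ≤ φ x}) = 0 := fun n => by
    have := le_antisymm (hcon n) measureReal_nonneg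
    exact (measureReal_eq_zero_iff).1 this
  have h1 := measure_iUnion_null h0
  have h2 : (⋃ n : ℕ, ({x : E | ‖x‖ ≤ n} ∩ {x | -(n:ℝ) ≤ φ x})) = Set.univ := by
    refine Set.eq_univ_of_forall fun x => ?_
    obtain ⟨n, hn⟩ := exists_nat_ge (max ‖x‖ (-φ x))
    refine Set.mem_iUnion.2 ⟨n, (le_max_left _ _).trans hn, ?_⟩
    have := (le_max_right ‖x‖ (-φ x)).trans hn
    simp only [Set.mem_ofPred_eq]
    linarith
  rw [h2, measure_univ] at h1
  exact one_ne_zero h1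

theorem LDom.wgt {ε : ℝ} (hε : 0 < ε) {μ : Measure E} [IsProbabilityMeasure μ]
    {c : E × E → ℝ} (hc : ContDiff ℝ 2 c) {φ ψ : E → ℝ} (hφm : Measurable φ)
    (hs2 : ∀ y, ∫ x, schrDensity ε c φ ψ x y ∂μ = 1)
    {A : ℝ} (hA : 0 ≤ A) (hg : ∀ x y, ‖_root_.gradx c x y‖ ≤ A * (1 + ‖x‖ + ‖y‖)) :
    LDom (fun x y => wgt ε c ψ x y) := by
  obtain ⟨n, hn⟩ := exists_good_set (μ := μ) hφm
  set S := {x : E | ‖x‖ ≤ n} ∩ {x | -(n:ℝ) ≤ φ x} with hS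
  have hSm : MeasurableSet S :=
    (measurableSet_le measurable_norm measurable_const).inter
      (measurableSet_le measurable_const hφm)
  intro r
  set ρ := max r n with hρ
  have hρ0 : 0 ≤ ρ := (Nat.cast_nonneg n).trans (le_max_right _ _)
  refine ⟨(μ.real S)⁻¹ * Real.exp ((n + A * (1 + ρ) * (2 * ρ)) / ε), A * (2 * ρ) / ε,
    by positivity, fun x hx y => ?_⟩
  have hdiff : ∀ x' ∈ S, c (x', y) ≤ c (x, y) + A * (1 + ρ + ‖y‖) * (2 * ρ) := by
    intro x' hx'
    have hx1 : x ∈ Metric.closedBall (0 : E) ρ := by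
      rw [mem_closedBall_zero_iff]; exact hx.trans (le_max_left _ _)
    have hx2 : x' ∈ Metric.closedBall (0 : E) ρ := by
      rw [mem_closedBall_zero_iff]; exact (show ‖x'‖ ≤ n from hx'.1).trans (le_max_right _ _)
    have h1 := (convex_closedBall (0 : E) ρ).norm_image_sub_le_of_norm_hasFDerivWithin_le
      (f := fun x' => c (x', y)) (C := A * (1 + ρ + ‖y‖))
      (fun z _ => (hasFDerivAt_c hc z y).hasFDerivWithinAt)
      (fun z hz => by
        rw [innerSL_apply_norm]
        refine (hg z y).trans (mul_le_mul_of_nonneg_left ?_ hA)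
        have : ‖z‖ ≤ ρ := by simpa using hz
        linarith) hx1 hx2
    have h2 : ‖x' - x‖ ≤ 2 * ρ := by
      have := norm_sub_le x' x
      have h3 : ‖x'‖ ≤ ρ := by simpa using hx2
      have h4 : ‖x‖ ≤ ρ := by simpa using hx1
      linarith
    have h5 := mul_le_mul_of_nonneg_left h2 (show 0 ≤ A * (1 + ρ + ‖y‖) by positivity)
    have h6 := (le_abs_self _).trans (h1.trans h5)
    linarith
  have hIntg : Integrable (fun x => schrDensity ε c φ ψ x y) μ := by
    by_contra hni
    have := hs2 y
    rw [integral_undef hni] at this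
    exact zero_ne_one this
  have hlow : ∫ _x in S, Real.exp ((ψ y - c (x, y) - n - A * (1 + ρ + ‖y‖) * (2 * ρ)) / ε) ∂μ
      ≤ 1 := by
    calc _ ≤ ∫ x in S, schrDensity ε c φ ψ x y ∂μ := by
          refine setIntegral_mono_on (integrableOn_const (by finiteness)) hIntg.integrableOn hSm ?_
          intro x' hx'
          refine Real.exp_le_exp.2 (div_le_div_of_nonneg_right ?_ hε.le)
          have h1 := hdiff x' hx'
          have h2 : -(n:ℝ) ≤ φ x' := hx'.2
          linarith
      _ ≤ ∫ x, schrDensity ε c φ ψ x y ∂μ :=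
          setIntegral_le_integral hIntg
            (Filter.Eventually.of_forall fun x => (Real.exp_pos _).le)
      _ = 1 := hs2 y
  rw [setIntegral_const, smul_eq_mul] at hlow
  have hw : _root_.wgt ε c ψ x y =
      Real.exp ((ψ y - c (x, y) - n - A * (1 + ρ + ‖y‖) * (2 * ρ)) / ε) *
      (Real.exp ((n + A * (1 + ρ) * (2 * ρ)) / ε) * Real.exp (A * (2 * ρ) / ε * ‖y‖)) := by
    rw [← Real.exp_add, ← Real.exp_add, _root_.wgt]
    congr 1
    ring
  have hw0 : (0 : ℝ) ≤ _root_.wgt ε c ψ x y := (Real.exp_pos _).le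
  show ‖_root_.wgt ε c ψ x y‖ ≤ _
  rw [Real.norm_of_nonneg hw0, hw, mul_assoc (μ.real S)⁻¹]
  refine mul_le_mul_of_nonneg_right ?_ (by positivity)
  rw [← one_div, le_div_iff₀ hn, mul_comm]
  exact hlow

theorem outer_apply (a b v : E) : outer a b v = ⟪b, v⟫ • a := by
  simp [outer]

theorem norm_outer_le (a b : E) : ‖outer a b‖ ≤ ‖b‖ * ‖a‖ := by
  rw [outer, ContinuousLinearMap.norm_smulRight_apply, innerSL_apply_norm]

theorem continuous_outer {X : Type*} [TopologicalSpace X] {a b : X → E}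
    (ha : Continuous a) (hb : Continuous b) : Continuous (fun x => outer (a x) (b x)) := by
  unfold outer
  exact (((ContinuousLinearMap.smulRightL ℝ E E).continuous.comp
    ((innerSL ℝ).continuous.comp hb)).clm_apply ha)

set_option maxHeartbeats 2000000 in
theorem half {ε : ℝ} (hε : 0 < ε) {μ ν : Measure E} [IsProbabilityMeasure μ]
    (hν : ∀ K : ℝ, Integrable (fun y : E => Real.exp (K * ‖y‖)) ν)
    {c : E × E → ℝ} (hc : ContDiff ℝ 2 c)
    (hHess : ∃ R : ℝ, ∀ z : E × E, ‖iteratedFDeriv ℝ 2 c z‖ ≤ R)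
    {φ ψ : E → ℝ} (hφm : Measurable φ) (hψm : Measurable ψ)
    (hs1 : ∀ x, ∫ y, schrDensity ε c φ ψ x y ∂ν = 1)
    (hs2 : ∀ y, ∫ x, schrDensity ε c φ ψ x y ∂μ = 1) :
    (HasWeakGradient φ fun x => ∫ y, schrDensity ε c φ ψ x y • gradx c x y ∂ν) ∧
    (HasWeakJacobian (fun x => ∫ y, schrDensity ε c φ ψ x y • gradx c x y ∂ν)
      fun x =>
        (∫ y, schrDensity ε c φ ψ x y • hessx c x y ∂ν)
          - ε⁻¹ • ((∫ y, schrDensity ε c φ ψ x y • outer (gradx c x y) (gradx c x y) ∂ν)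
            - outer (∫ y, schrDensity ε c φ ψ x y • gradx c x y ∂ν)
                (∫ y, schrDensity ε c φ ψ x y • gradx c x y ∂ν))) := by
  obtain ⟨A, hA, hg, hh⟩ := gradx_hessx_bound hc hHess
  have hcc : Continuous c := hc.continuous
  have hgc := continuous_gradx hc
  have hhc := continuous_hessx hc
  have Lw : LDom (fun x y => wgt ε c ψ x y) := LDom.wgt hε hc hφm hs2 hA hg
  have Lg := LDom.gradx hA hg
  have Lh := LDom.hessx hA hh
  have Lwg := Lw.smul Lg
  have Lwh := Lw.smul Lh
  have Lo : LDom (fun x y => outer (gradx c x y) (gradx c x y)) := by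
    have : LDom (fun x y => ‖gradx c x y‖) := Lg.mono 1 zero_le_one (by simp)
    refine (this.smul this).mono 1 zero_le_one fun x y => ?_
    simpa using norm_outer_le (gradx c x y) (gradx c x y)
  have Lwo := Lw.smul Lo
  -- measurability
  have gy (x : E) : Continuous (fun y => gradx c x y) := hgc.comp (Continuous.prodMk_right x)
  have hy (x : E) : Continuous (fun y => hessx c x y) := hhc.comp (Continuous.prodMk_right x)
  have gx (y : E) : Continuous (fun x => gradx c x y) := hgc.comp (Continuous.prodMk_left y)
  have hx (y : E) : Continuous (fun x => hessx c x y) := hhc.comp (Continuous.prodMk_left y)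
  have mw (x : E) : AEStronglyMeasurable (fun y => wgt ε c ψ x y) ν := by
    refine Measurable.aestronglyMeasurable ?_
    unfold wgt
    have : Continuous (fun y => c (x, y)) := hcc.comp (Continuous.prodMk_right x)
    have := this.measurable
    fun_prop
  have mwg (x : E) : AEStronglyMeasurable (fun y => wgt ε c ψ x y • gradx c x y) ν :=
    (mw x).smul (gy x).aestronglyMeasurable
  have mwh (x : E) : AEStronglyMeasurable (fun y => wgt ε c ψ x y • hessx c x y) ν :=
    (mw x).smul (hy x).aestronglyMeasurable
  have mwo (x : E) : AEStronglyMeasurable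
      (fun y => wgt ε c ψ x y • outer (gradx c x y) (gradx c x y)) ν :=
    (mw x).smul (continuous_outer (gy x) (gy x)).aestronglyMeasurable
  have mwi (x : E) : AEStronglyMeasurable
      (fun y => -ε⁻¹ • innerSL ℝ (wgt ε c ψ x y • gradx c x y)) ν := by
    have h0 : AEStronglyMeasurable (fun y => innerSL ℝ (wgt ε c ψ x y • gradx c x y)) ν :=
      (innerSL ℝ : E →L[ℝ] E →L[ℝ] ℝ).continuous.comp_aestronglyMeasurable (mwg x)
    exact h0.const_smul (-ε⁻¹)
  have mwd (x : E) : AEStronglyMeasurable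
      (fun y => wgt ε c ψ x y • hessx c x y
        - ε⁻¹ • (wgt ε c ψ x y • outer (gradx c x y) (gradx c x y))) ν :=
    (mwh x).sub ((mwo x).const_smul ε⁻¹)
  -- continuity in `x`
  have cw (y : E) : Continuous (fun x => wgt ε c ψ x y) := by
    unfold wgt
    fun_prop
  -- derivatives in `x`
  have dw (x y : E) : HasFDerivAt (fun x' => wgt ε c ψ x' y)
      (-ε⁻¹ • innerSL ℝ (wgt ε c ψ x y • gradx c x y)) x := by
    have h1 := (((hasFDerivAt_c hc x y).const_sub (ψ y)).mul_const ε⁻¹).exp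
    refine h1.congr_fderiv ?_
    ext v
    simp only [wgt, div_eq_mul_inv]
    simp
    ring
  have dwg (x y : E) : HasFDerivAt (fun x' => wgt ε c ψ x' y • gradx c x' y)
      (wgt ε c ψ x y • hessx c x y
        - ε⁻¹ • (wgt ε c ψ x y • outer (gradx c x y) (gradx c x y))) x := by
    refine ((dw x y).smul (hasFDerivAt_gradx hc x y)).congr_fderiv ?_
    ext1 v
    simp [outer_apply, smul_smul, sub_eq_add_neg, mul_assoc]
  -- integrals
  set F : E → ℝ := fun x => ∫ y, wgt ε c ψ x y ∂ν with hF
  set G : E → E := fun x => ∫ y, wgt ε c ψ x y • gradx c x y ∂ν with hG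
  set H : E → E →L[ℝ] E := fun x => ∫ y, wgt ε c ψ x y • hessx c x y ∂ν with hH
  set O : E → E →L[ℝ] E := fun x => ∫ y, wgt ε c ψ x y • outer (gradx c x y) (gradx c x y) ∂ν
    with hO
  have iG (x : E) := Lwg.integrable hν mwg x
  have iH (x : E) := Lwh.integrable hν mwh x
  have intOut (x : E) := Lwo.integrable hν mwo x
  have cG : Continuous G := Lwg.continuous hν mwg fun y => (cw y).smul (gx y)
  have cH : Continuous H := Lwh.continuous hν mwh fun y => (cw y).smul (hx y)
  have cO : Continuous O :=
    Lwo.continuous hν mwo fun y => (cw y).smul (continuous_outer (gx y) (gx y))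
  have dF (x : E) : HasFDerivAt F (-ε⁻¹ • innerSL ℝ (G x)) x := by
    have h1 := LDom.hasFDerivAt hν Lw mw
      (f' := fun x y => -ε⁻¹ • innerSL ℝ (wgt ε c ψ x y • gradx c x y))
      (Lwg.mono ε⁻¹ (by positivity) fun x y => by
        rw [norm_smul, innerSL_apply_norm, norm_neg, Real.norm_of_nonneg (by positivity)])
      mwi dw x
    refine h1.congr_fderiv ?_
    rw [integral_smul]
    congr 1
    exact (innerSL ℝ : E →L[ℝ] E →L[ℝ] ℝ).integral_comp_comm (iG x)
  have dG (x : E) : HasFDerivAt G (H x - ε⁻¹ • O x) x := by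
    have Ld : LDom (fun x y => wgt ε c ψ x y • hessx c x y
        - ε⁻¹ • (wgt ε c ψ x y • outer (gradx c x y) (gradx c x y))) := by
      intro r
      obtain ⟨C, K, hC, h⟩ := Lwh r
      obtain ⟨C', K', hC', h'⟩ := Lwo r
      refine ⟨C + ε⁻¹ * C', max K K', by positivity, fun x hx y => ?_⟩
      refine (norm_sub_le _ _).trans ?_
      rw [add_mul]
      refine add_le_add ((h x hx y).trans ?_) ?_
      · gcongr
        exact le_max_left _ _
      · rw [norm_smul, Real.norm_of_nonneg (by positivity), mul_assoc]
        refine mul_le_mul_of_nonneg_left ((h' x hx y).trans ?_) (by positivity)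
        gcongr
        exact le_max_right _ _
    have h1 := LDom.hasFDerivAt hν Lwg mwg Ld
      mwd dwg x
    refine h1.congr_fderiv ?_
    have intOut' : Integrable (fun y => ε⁻¹ • (wgt ε c ψ x y • outer (gradx c x y) (gradx c x y))) ν :=
      (intOut x).smul ε⁻¹
    rw [integral_sub (iH x) intOut', integral_smul]
  have hFe (x : E) : Real.exp (φ x / ε) * F x = 1 := by
    rw [← hs1 x, hF]
    simp_rw [schr_eq]
    rw [integral_const_mul]
  have hFpos (x : E) : 0 < F x := by
    by_contra hcon
    have := mul_nonpos_of_nonneg_of_nonpos (Real.exp_pos (φ x / ε)).le (not_lt.1 hcon)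
    rw [hFe x] at this
    linarith
  have hFinv (x : E) : (F x)⁻¹ = Real.exp (φ x / ε) :=
    (eq_inv_of_mul_eq_one_left (hFe x)).symm
  have hφF : φ = fun x => -ε * Real.log (F x) := by
    ext x
    have h1 : Real.log (F x) = - (φ x / ε) := by
      rw [← Real.log_exp (φ x / ε), ← hFinv, Real.log_inv, neg_neg]
    rw [h1]
    field_simp
  have eG (x : E) : ∫ y, schrDensity ε c φ ψ x y • gradx c x y ∂ν = Real.exp (φ x / ε) • G x := by
    simp_rw [schr_eq, mul_smul]
    rw [integral_smul]
  have eH (x : E) : ∫ y, schrDensity ε c φ ψ x y • hessx c x y ∂ν = Real.exp (φ x / ε) • H x := by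
    simp_rw [schr_eq, mul_smul]
    rw [integral_smul]
  have eO (x : E) : ∫ y, schrDensity ε c φ ψ x y • outer (gradx c x y) (gradx c x y) ∂ν =
      Real.exp (φ x / ε) • O x := by
    simp_rw [schr_eq, mul_smul]
    rw [integral_smul]
  simp_rw [eG, eH, eO]
  have dφ (x : E) : HasFDerivAt φ (innerSL ℝ (Real.exp (φ x / ε) • G x)) x := by
    have h1 := ((dF x).log (hFpos x).ne').const_mul (-ε)
    rw [← hφF] at h1
    refine h1.congr_fderiv ?_
    ext v
    simp only [hFinv]
    simp
    field_simp
  have cφ : Continuous φ := continuous_iff_continuousAt.2 fun x => (dφ x).continuousAt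
  have ce : Continuous (fun x => Real.exp (φ x / ε)) := by fun_prop
  have cm : Continuous (fun x => Real.exp (φ x / ε) • G x) := ce.smul cG
  refine ⟨hasWeakGradient_of_C1 dφ cm, fun i => ?_⟩
  have dm (x : E) : HasFDerivAt (fun x => Real.exp (φ x / ε) • G x)
      (Real.exp (φ x / ε) • H x - ε⁻¹ • (Real.exp (φ x / ε) • O x -
        outer (Real.exp (φ x / ε) • G x) (Real.exp (φ x / ε) • G x))) x := by
    have h0 : HasFDerivAt (fun x => Real.exp (φ x / ε)) _ x := ((dφ x).mul_const ε⁻¹).exp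
    refine (h0.smul (dG x)).congr_fderiv ?_
    ext1 v
    simp only [div_eq_mul_inv]
    simp [outer_apply, smul_smul, smul_sub, real_inner_smul_left]
    module
  refine hasWeakGradient_of_C1 (fun x => ?_) ?_
  · have h1 := (innerSL ℝ (EuclideanSpace.single i (1:ℝ))).hasFDerivAt.comp x (dm x)
    refine (h1.congr_of_eventuallyEq
      (Filter.Eventually.of_forall fun y => ?_)).congr_fderiv ?_
    · simp only [Function.comp, innerSL_apply_apply]
      exact real_inner_comm _ _
    · ext v
      simp only [innerSL_apply_apply, ContinuousLinearMap.comp_apply]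
      rw [ContinuousLinearMap.adjoint_inner_left]
  · have cA := (ce.smul cH).sub (((ce.smul cO).sub (continuous_outer cm cm)).const_smul ε⁻¹)
    have cadj : Continuous (fun T : E →L[ℝ] E => ContinuousLinearMap.adjoint T) :=
      ContinuousLinearMap.adjoint.continuous
    exact (cadj.comp cA).clm_apply continuous_const

/-- Derivatives of the Schrödinger potentials: `∇φ(x) = E_π[∇_x c(X,Y) | X = x]`
(the conditional expectation being the explicit `ν`-integral against the conditional
density), `∇ψ(y) = E_π[∇_y c(X,Y) | Y = y]`, and the weak gradients are themselves
weakly differentiable with `∇²φ = E_π[∇²_{xx}c | X=x] − ε⁻¹ Cov_π(∇_x c | X=x)` and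
`∇²ψ = E_π[∇²_{yy}c | Y=y] − ε⁻¹ Cov_π(∇_y c | Y=y)`. -/
theorem schrodinger_potentials_derivatives
    (ε : ℝ) (hε : 0 < ε)
    (U V : E → ℝ) (hU : ContDiff ℝ 2 U) (hV : ContDiff ℝ 2 V)
    (μ ν : Measure E)
    (hμ : μ = volume.withDensity fun x => ENNReal.ofReal (Real.exp (-U x)))
    (hν : ν = volume.withDensity fun y => ENNReal.ofReal (Real.exp (-V y)))
    [IsProbabilityMeasure μ] [IsProbabilityMeasure ν]
    (δ : ℝ) (hδ : 0 < δ)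
    (hsub : Integrable
      (fun x => Real.exp (δ * ‖x‖ ^ 2) * (Real.exp (-U x) + Real.exp (-V x))) volume)
    (c : E × E → ℝ) (hc0 : ∀ z, 0 ≤ c z) (hc : ContDiff ℝ 2 c)
    (hHess : ∃ R : ℝ, ∀ z : E × E, ‖iteratedFDeriv ℝ 2 c z‖ ≤ R)
    (φ ψ : E → ℝ) (hφm : Measurable φ) (hψm : Measurable ψ)
    (hs1 : ∀ x, ∫ y, schrDensity ε c φ ψ x y ∂ν = 1)
    (hs2 : ∀ y, ∫ x, schrDensity ε c φ ψ x y ∂μ = 1) :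
    (HasWeakGradient φ fun x => ∫ y, schrDensity ε c φ ψ x y • gradx c x y ∂ν) ∧
    (HasWeakGradient ψ fun y => ∫ x, schrDensity ε c φ ψ x y • grady c x y ∂μ) ∧
    (HasWeakJacobian (fun x => ∫ y, schrDensity ε c φ ψ x y • gradx c x y ∂ν)
      fun x =>
        (∫ y, schrDensity ε c φ ψ x y • hessx c x y ∂ν)
          - ε⁻¹ • ((∫ y, schrDensity ε c φ ψ x y • outer (gradx c x y) (gradx c x y) ∂ν)
            - outer (∫ y, schrDensity ε c φ ψ x y • gradx c x y ∂ν)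
                (∫ y, schrDensity ε c φ ψ x y • gradx c x y ∂ν))) ∧
    (HasWeakJacobian (fun y => ∫ x, schrDensity ε c φ ψ x y • grady c x y ∂μ)
      fun y =>
        (∫ x, schrDensity ε c φ ψ x y • hessy c x y ∂μ)
          - ε⁻¹ • ((∫ x, schrDensity ε c φ ψ x y • outer (grady c x y) (grady c x y) ∂μ)
            - outer (∫ x, schrDensity ε c φ ψ x y • grady c x y ∂μ)
                (∫ x, schrDensity ε c φ ψ x y • grady c x y ∂μ))) := by
  have hνm : ∀ K : ℝ, Integrable (fun y : E => Real.exp (K * ‖y‖)) ν := by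
    rw [hν]
    refine exp_moments hδ hV.continuous (hsub.mono' ?_ (Filter.Eventually.of_forall fun x => ?_))
    · have := hV.continuous
      exact Continuous.aestronglyMeasurable (by fun_prop)
    · rw [Real.norm_of_nonneg (by positivity)]
      gcongr
      linarith [Real.exp_pos (-U x)]
  have hμm : ∀ K : ℝ, Integrable (fun y : E => Real.exp (K * ‖y‖)) μ := by
    rw [hμ]
    refine exp_moments hδ hU.continuous (hsub.mono' ?_ (Filter.Eventually.of_forall fun x => ?_))
    · have := hU.continuous
      exact Continuous.aestronglyMeasurable (by fun_prop)
    · rw [Real.norm_of_nonneg (by positivity)]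
      gcongr
      linarith [Real.exp_pos (-V x)]
  have hsw (x y : E) : schrDensity ε (fun z : E × E => c (z.2, z.1)) ψ φ y x =
      schrDensity ε c φ ψ x y := by
    simp only [schrDensity, add_comm]
  have hc' : ContDiff ℝ 2 (fun z : E × E => c (z.2, z.1)) :=
    hc.comp (contDiff_snd.prodMk contDiff_fst)
  have hHess' : ∃ R : ℝ, ∀ z : E × E,
      ‖iteratedFDeriv ℝ 2 (fun z : E × E => c (z.2, z.1)) z‖ ≤ R := by
    obtain ⟨R, hR⟩ := hHess
    refine ⟨R, fun z => ?_⟩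
    have h1 := (LinearIsometryEquiv.prodComm ℝ E E).norm_iteratedFDeriv_comp_right
      (𝕜 := ℝ) c z 2
    exact h1.le.trans (hR _)
  obtain ⟨h1, h2⟩ := half hε hνm hc hHess hφm hψm hs1 hs2
  obtain ⟨h3, h4⟩ := half (μ := ν) (ν := μ) (φ := ψ) (ψ := φ) hε hμm hc' hHess' hψm hφm
    (fun y => by simpa only [hsw] using hs2 y) (fun x => by simpa only [hsw] using hs1 x)
  simp only [hsw] at h3 h4
  exact ⟨h1, h3, h2, h4⟩

end
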